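/- Let S be a 2^n-periodic binary sequence with L(S) = 2^n, and suppose that 2^n - 2^s < L_1(S) < 2^n - 2^{s-1} for some integer s with 1 ≤ s ≤ n. Then the number of positions j ∈ {0, 1, ..., 2^n - 1} such that L(S + E_1(j)) = L_1(S) is exactly 2^{n-s}. -/

import Mathlib

/-- Generating polynomial `S^N(x) = s_0 + s_1 x + ... + s_{N-1} x^{N-1}` of one period
of an `N`-periodic binary sequence. -/
noncomputable def genPoly {N : ℕ} (S : Fin N → ZMod 2) : Polynomial (ZMod 2) :=
  ∑ i : Fin N, Polynomial.C (S i) * Polynomial.X ^ (i : ℕ)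

/-- Linear complexity `L(S) = N - deg (gcd (1 - x^N, S^N(x)))`. -/
noncomputable def linComp {N : ℕ} (S : Fin N → ZMod 2) : ℕ :=
  N - (EuclideanDomain.gcd (1 - Polynomial.X ^ N) (genPoly S)).natDegree

/-- Hamming weight of one period of an `N`-periodic binary sequence. -/
def wt {N : ℕ} (T : Fin N → ZMod 2) : ℕ :=
  (Finset.univ.filter (fun i => T i ≠ 0)).card

/-- `k`-error linear complexity `L_{N,k}(S)`. -/
noncomputable def errLC {N : ℕ} (S : Fin N → ZMod 2) (k : ℕ) : ℕ :=
  sInf {c | ∃ T : Fin N → ZMod 2, wt T ≤ k ∧ linComp (S + T) = c}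

/-- `k`-error linear complexity with a zone of length `Z`: `L_{N,k;Z}(S)`. -/
noncomputable def errLCZone {N : ℕ} (S : Fin N → ZMod 2) (k Z : ℕ) : ℕ :=
  sInf {c | ∃ T : Fin N → ZMod 2, wt T ≤ k ∧ (∀ i : Fin N, Z ≤ (i : ℕ) → T i = 0) ∧
    linComp (S + T) = c}

/-- `E_1(j)`: the sequence whose only nonzero term in one period is a `1` at position `j`. -/
def E1 {N : ℕ} (j : Fin N) : Fin N → ZMod 2 :=
  fun i => if i = j then 1 else 0

/-!
Over `ZMod 2` one has `1 - X ^ 2 ^ n = (X - 1) ^ 2 ^ n`, so `L(S) ≤ 2 ^ n - v` means that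
`(X - 1) ^ v` divides the generating polynomial of `S`. As `L_1(S) < L(S)`, the value `L_1(S)` is
attained at some `S + E_1(i)`. With `v = 2 ^ n - L_1(S)`, a position `j` attains it too if and only
if `(X - 1) ^ v ∣ X ^ j - X ^ i`. The root `1` of `X ^ d - 1` has as its multiplicity the largest
power of `2` dividing `d`, and `2 ^ (s - 1) < v < 2 ^ s`, so this amounts to `j ≡ i` modulo `2 ^ s`.
-/

section Polynomial

open Polynomial

variable {F : Type*} [Field F]

theorem le_natDegree_gcd_X_sub_C_pow_iff [DecidableEq F[X]] {a : F} {k N : ℕ} (hk : k ≤ N)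
    (f : F[X]) :
    k ≤ (EuclideanDomain.gcd ((X - C a) ^ N) f).natDegree ↔ (X - C a) ^ k ∣ f := by
  set g := EuclideanDomain.gcd ((X - C a) ^ N) f
  obtain ⟨m, -, hgm⟩ : ∃ m ≤ N, Associated g ((X - C a) ^ m) :=
    (dvd_prime_pow (prime_X_sub_C a) N).1 (EuclideanDomain.gcd_dvd_left _ _)
  have hdeg : g.natDegree = m := by
    rw [natDegree_eq_of_degree_eq (degree_eq_degree_of_associated hgm), natDegree_pow,
      natDegree_X_sub_C, mul_one]
  calc
    k ≤ g.natDegree ↔ (X - C a) ^ k ∣ (X - C a) ^ m := by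
      rw [hdeg, pow_dvd_pow_iff (X_sub_C_ne_zero a) (not_isUnit_X_sub_C a)]
    _ ↔ (X - C a) ^ k ∣ g := hgm.dvd_iff_dvd_right.symm
    _ ↔ (X - C a) ^ k ∣ f :=
      ⟨fun h => h.trans (EuclideanDomain.gcd_dvd_right _ _),
        fun h => EuclideanDomain.dvd_gcd (pow_dvd_pow _ hk) h⟩

theorem rootMultiplicity_one_X_pow_sub_one_of_natCast_ne_zero {m : ℕ} (hm : (m : F) ≠ 0) :
    rootMultiplicity 1 (X ^ m - 1 : F[X]) = 1 := by
  have hsep : (X ^ m - 1 : F[X]).Separable := X_pow_sub_one_separable_iff.2 hm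
  have hroot : (X ^ m - 1 : F[X]).IsRoot 1 := by simp
  exact le_antisymm (rootMultiplicity_le_one_of_separable hsep 1)
    ((rootMultiplicity_pos hsep.ne_zero).2 hroot)

variable (p : ℕ) [Fact p.Prime] [CharP F p]

theorem rootMultiplicity_one_X_pow_sub_one {d : ℕ} (hd : d ≠ 0) :
    rootMultiplicity 1 (X ^ d - 1 : F[X]) = ordProj[p] d := by
  have hexpand : (X ^ d - 1 : F[X]) = expand F (ordProj[p] d) (X ^ ordCompl[p] d - 1) := by
    rw [map_sub, map_pow, expand_X, map_one, ← pow_mul, Nat.ordProj_mul_ordCompl_eq_self]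
  have hcompl : ((ordCompl[p] d : ℕ) : F) ≠ 0 := by
    rw [Ne, CharP.cast_eq_zero_iff F p]
    exact Nat.not_dvd_ordCompl Fact.out hd
  rw [hexpand, rootMultiplicity_expand_pow, one_pow,
    rootMultiplicity_one_X_pow_sub_one_of_natCast_ne_zero hcompl, mul_one]

theorem X_sub_C_one_pow_dvd_X_pow_sub_one_iff {s v : ℕ} (hsv : p ^ s < v) (hvs : v ≤ p ^ (s + 1))
    (d : ℕ) : (X - C 1 : F[X]) ^ v ∣ X ^ d - 1 ↔ p ^ (s + 1) ∣ d := by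
  have hp : p.Prime := Fact.out
  rcases eq_or_ne d 0 with rfl | hd
  · simp
  have hne : (X ^ d - 1 : F[X]) ≠ 0 := by simpa using (monic_X_pow_sub_C (1 : F) hd).ne_zero
  rw [← le_rootMultiplicity_iff hne, rootMultiplicity_one_X_pow_sub_one p hd,
    hp.pow_dvd_iff_le_factorization hd]
  exact ⟨fun h => (Nat.pow_lt_pow_iff_right hp.one_lt).1 (hsv.trans_le h),
    fun h => hvs.trans (Nat.pow_le_pow_right hp.pos h)⟩

theorem X_sub_C_one_pow_dvd_X_pow_sub_X_pow_iff {s v : ℕ} (hsv : p ^ s < v)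
    (hvs : v ≤ p ^ (s + 1)) (a b : ℕ) :
    (X - C 1 : F[X]) ^ v ∣ X ^ a - X ^ b ↔ a ≡ b [MOD p ^ (s + 1)] := by
  wlog hba : b ≤ a generalizing a b
  · rw [dvd_sub_comm, this b a (le_of_not_ge hba), Nat.ModEq.comm]
  obtain ⟨d, rfl⟩ := Nat.exists_eq_add_of_le hba
  have hcoprime : IsCoprime ((X - C 1 : F[X]) ^ v) (X ^ b) :=
    IsCoprime.pow ⟨-1, 1, by rw [map_one]; ring⟩
  have hfactor : (X ^ (b + d) - X ^ b : F[X]) = X ^ b * (X ^ d - 1) := by ring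
  have hcancel : (X - C 1 : F[X]) ^ v ∣ X ^ b * (X ^ d - 1) ↔
      (X - C 1 : F[X]) ^ v ∣ X ^ d - 1 :=
    ⟨hcoprime.dvd_of_dvd_mul_left, fun h => h.mul_left _⟩
  rw [hfactor, hcancel, X_sub_C_one_pow_dvd_X_pow_sub_one_iff p hsv hvs,
    Nat.ModEq.comm, Nat.modEq_iff_dvd' hba, Nat.add_sub_cancel_left]

end Polynomial

theorem card_filter_fin_modEq {N r : ℕ} (hr : 0 < r) (hrN : r ∣ N) (a : ℕ) :
    (Finset.univ.filter fun j : Fin N => (j : ℕ) ≡ a [MOD r]).card = N / r := by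
  rw [Finset.card_filter, Fin.sum_univ_eq_sum_range (fun j => if j ≡ a [MOD r] then 1 else 0),
    ← Finset.card_filter, ← Nat.count_eq_card_filter_range, Nat.count_modEq_card N hr,
    Nat.mod_eq_zero_of_dvd hrN, if_neg (Nat.not_lt_zero _), add_zero]

section Sequence

open Polynomial

variable {N : ℕ}

theorem genPoly_add (S T : Fin N → ZMod 2) : genPoly (S + T) = genPoly S + genPoly T := by
  simp [genPoly, add_mul, Finset.sum_add_distrib]

theorem genPoly_E1 (j : Fin N) : genPoly (E1 j) = X ^ (j : ℕ) := by
  simp [genPoly, E1]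

theorem wt_E1 (j : Fin N) : wt (E1 j) = 1 := by
  simp [wt, E1, Finset.filter_eq']

theorem eq_zero_or_exists_eq_E1_of_wt_le_one {T : Fin N → ZMod 2} (hT : wt T ≤ 1) :
    T = 0 ∨ ∃ j, T = E1 j := by
  refine or_iff_not_imp_left.2 fun hT0 => ?_
  obtain ⟨j, hj⟩ := Function.ne_iff.1 hT0
  have hsupp : ∀ i, T i ≠ 0 → i = j := fun i hi =>
    Finset.card_le_one.1 hT i (Finset.mem_filter.2 ⟨Finset.mem_univ i, hi⟩) j
      (Finset.mem_filter.2 ⟨Finset.mem_univ j, hj⟩)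
  refine ⟨j, funext fun i => ?_⟩
  by_cases hij : i = j
  · rw [E1, if_pos hij, hij]
    exact Fin.eq_one_of_ne_zero (T j) hj
  · rw [E1, if_neg hij]
    exact not_not.1 (mt (hsupp i) hij)

theorem errLC_le_linComp_add (S : Fin N → ZMod 2) {T : Fin N → ZMod 2} {k : ℕ} (hT : wt T ≤ k) :
    errLC S k ≤ linComp (S + T) :=
  Nat.sInf_le ⟨T, hT, rfl⟩

theorem exists_linComp_add_eq_errLC (S : Fin N → ZMod 2) (k : ℕ) :
    ∃ T, wt T ≤ k ∧ linComp (S + T) = errLC S k :=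
  Nat.sInf_mem (s := {c | ∃ T, wt T ≤ k ∧ linComp (S + T) = c}) ⟨_, 0, by simp [wt], rfl⟩

theorem exists_linComp_add_E1_eq_errLC_one {S : Fin N → ZMod 2} (hS : errLC S 1 < linComp S) :
    ∃ j, linComp (S + E1 j) = errLC S 1 := by
  obtain ⟨T, hwt, hT⟩ := exists_linComp_add_eq_errLC S 1
  rcases eq_zero_or_exists_eq_E1_of_wt_le_one hwt with rfl | ⟨j, rfl⟩
  · rw [add_zero] at hT
    exact absurd hT hS.ne'
  · exact ⟨j, hT⟩

theorem linComp_add_E1_eq_errLC_one_iff_le (S : Fin N → ZMod 2) (j : Fin N) :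
    linComp (S + E1 j) = errLC S 1 ↔ linComp (S + E1 j) ≤ errLC S 1 :=
  (errLC_le_linComp_add S (wt_E1 j).le).ge_iff_eq'.symm

variable {n : ℕ}

theorem linComp_le_two_pow_sub_iff {v : ℕ} (hv : v ≤ 2 ^ n) (S : Fin (2 ^ n) → ZMod 2) :
    linComp S ≤ 2 ^ n - v ↔ (X - C 1) ^ v ∣ genPoly S := by
  have hpow : (1 - X ^ 2 ^ n : (ZMod 2)[X]) = (X - C 1) ^ 2 ^ n := by
    rw [sub_pow_char_pow, map_one, one_pow, CharTwo.sub_eq_add, CharTwo.sub_eq_add, add_comm]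
  rw [← le_natDegree_gcd_X_sub_C_pow_iff hv, linComp, hpow, tsub_le_tsub_iff_left hv]

theorem linComp_add_E1_le_iff_modEq {S : Fin (2 ^ n) → ZMod 2} {s v : ℕ} {i : Fin (2 ^ n)}
    (hsv : 2 ^ s < v) (hvs : v ≤ 2 ^ (s + 1)) (hvn : v ≤ 2 ^ n)
    (hi : linComp (S + E1 i) ≤ 2 ^ n - v) (j : Fin (2 ^ n)) :
    linComp (S + E1 j) ≤ 2 ^ n - v ↔ (j : ℕ) ≡ i [MOD 2 ^ (s + 1)] := by
  rw [linComp_le_two_pow_sub_iff hvn] at hi ⊢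
  have hdiff : (X ^ (j : ℕ) - X ^ (i : ℕ) : (ZMod 2)[X]) =
      genPoly (S + E1 j) - genPoly (S + E1 i) := by
    rw [genPoly_add, genPoly_add, genPoly_E1, genPoly_E1, add_sub_add_left_eq_sub]
  rw [← X_sub_C_one_pow_dvd_X_pow_sub_X_pow_iff (F := ZMod 2) 2 hsv hvs, hdiff]
  exact (dvd_sub_left hi).symm

end Sequence

/-- If `L(S) = 2^n` and `2^n - 2^s < L_1(S) < 2^n - 2^{s-1}`, then exactly `2^{n-s}`
positions `j` satisfy `L(S + E_1(j)) = L_1(S)`. -/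
theorem stmt4 (n s : ℕ) (hs1 : 1 ≤ s) (hsn : s ≤ n)
    (S : Fin (2^n) → ZMod 2) (hL : linComp S = 2^n)
    (h1 : 2^n - 2^s < errLC S 1) (h2 : errLC S 1 < 2^n - 2^(s-1)) :
    (Finset.univ.filter (fun j : Fin (2^n) => linComp (S + E1 j) = errLC S 1)).card
      = 2^(n-s) := by
  obtain ⟨t, rfl⟩ := Nat.exists_eq_add_of_le' hs1
  rw [Nat.add_sub_cancel] at h2
  obtain ⟨i, hi⟩ : ∃ i, linComp (S + E1 i) = errLC S 1 :=
    exists_linComp_add_E1_eq_errLC_one (by omega)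
  have hc : errLC S 1 = 2 ^ n - (2 ^ n - errLC S 1) := by omega
  have hmin : ∀ j, linComp (S + E1 j) = errLC S 1 ↔ (j : ℕ) ≡ i [MOD 2 ^ (t + 1)] := fun j => by
    rw [linComp_add_E1_eq_errLC_one_iff_le, hc]
    exact linComp_add_E1_le_iff_modEq (by omega) (by omega) (Nat.sub_le _ _) (hi.trans hc).le j
  simp only [hmin]
  rw [card_filter_fin_modEq (by positivity) (pow_dvd_pow 2 hsn), Nat.pow_div hsn two_pos]
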